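/- arXiv:2305.04305 — 2 statements merged into one kernel-verified Lean document; each statement's English description precedes it below -/
import Mathlib

section
/- For every integer k ≥ 6, the online size Ramsey number of the 4-cycle versus the path on k vertices satisfies ř(C₄,P_k) ≤ 3k − 5. -/
open SimpleGraph

/-- The set `S` of edges of the infinite complete graph on `ℕ` contains a copy of
the graph `G`: there is an injective map of the vertices of `G` into `ℕ` sending
every edge of `G` into `S`. -/
def HasCopy {V : Type*} (G : SimpleGraph V) (S : Set (Sym2 ℕ)) : Prop :=
  ∃ f : V → ℕ, Function.Injective f ∧ ∀ a b, G.Adj a b → s(f a, f b) ∈ S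

/-- `BuilderWinsIn G H R B r` means: in the online Ramsey game with targets a red copy
of `G` and a blue copy of `H`, from the position in which the edges in `R` have been
colored red and the edges in `B` have been colored blue, Builder has a strategy that
guarantees, against every Painter strategy, that within at most `r` further rounds the
colored edges contain a red copy of `G` or a blue copy of `H`.  (In each round Builder
chooses a previously unchosen non-loop edge of the infinite complete graph on `ℕ`, and
Painter immediately colors it red or blue; so Builder wins within `r + 1` rounds iff he
has already won, or he can choose an edge such that whichever color Painter gives it,
he can win within `r` further rounds.) -/
def BuilderWinsIn {V W : Type*} (G : SimpleGraph V) (H : SimpleGraph W) :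
    Set (Sym2 ℕ) → Set (Sym2 ℕ) → ℕ → Prop
  | R, B, 0 => HasCopy G R ∨ HasCopy H B
  | R, B, (r + 1) => HasCopy G R ∨ HasCopy H B ∨
      ∃ e : Sym2 ℕ, ¬ e.IsDiag ∧ e ∉ R ∧ e ∉ B ∧
        BuilderWinsIn G H (insert e R) B r ∧ BuilderWinsIn G H R (insert e B) r

/-- The online size Ramsey number `ř(G, H)`: the least `t` such that, starting from the
empty position, Builder can force a red copy of `G` or a blue copy of `H` within at
most `t` rounds. -/
noncomputable def onlineRamsey {V W : Type*} (G : SimpleGraph V) (H : SimpleGraph W) : ℕ :=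
  sInf {t | BuilderWinsIn G H ∅ ∅ t}

/-! ### Monotonicity of the game -/

/-- The game of the theorem. -/
abbrev Win (k : ℕ) (R B : Set (Sym2 ℕ)) (r : ℕ) : Prop :=
  BuilderWinsIn (cycleGraph 4) (pathGraph k) R B r

lemma Win.of_red {k : ℕ} {R B : Set (Sym2 ℕ)} (r : ℕ) (h : HasCopy (cycleGraph 4) R) :
    Win k R B r := by
  cases r with
  | zero => exact Or.inl h
  | succ r => exact Or.inl h

lemma Win.of_blue {k : ℕ} {R B : Set (Sym2 ℕ)} (r : ℕ) (h : HasCopy (pathGraph k) B) :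
    Win k R B r := by
  cases r with
  | zero => exact Or.inr h
  | succ r => exact Or.inr (Or.inl h)

lemma Win.succ {k : ℕ} (r : ℕ) : ∀ {R B : Set (Sym2 ℕ)}, Win k R B r → Win k R B (r + 1) := by
  induction r with
  | zero =>
    intro R B h
    rcases h with h | h
    · exact Win.of_red _ h
    · exact Win.of_blue _ h
  | succ r ih =>
    intro R B h
    rcases h with h | h | ⟨e, h1, h2, h3, h4, h5⟩
    · exact Win.of_red _ h
    · exact Win.of_blue _ h
    · exact Or.inr (Or.inr ⟨e, h1, h2, h3, ih h4, ih h5⟩)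

lemma Win.mono {k r s : ℕ} {R B : Set (Sym2 ℕ)} (hrs : r ≤ s) (h : Win k R B r) :
    Win k R B s := by
  induction s, hrs using Nat.le_induction with
  | base => exact h
  | succ s _ ih => exact ih.succ

/-- Builder may also play an edge that is already coloured: he just skips the round. -/
lemma Win.move {k r : ℕ} {R B : Set (Sym2 ℕ)} (e : Sym2 ℕ) (he : ¬ e.IsDiag)
    (h1 : Win k (insert e R) B r) (h2 : Win k R (insert e B) r) : Win k R B (r + 1) := by
  by_cases hR : e ∈ R
  · rw [Set.insert_eq_of_mem hR] at h1
    exact h1.succ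
  by_cases hB : e ∈ B
  · rw [Set.insert_eq_of_mem hB] at h2
    exact h2.succ
  exact Or.inr (Or.inr ⟨e, he, hR, hB, h1, h2⟩)

/-! ### Blue paths as lists -/

/-- There is a path on `n` vertices with all edges in `B`. -/
def HasPath (B : Set (Sym2 ℕ)) (n : ℕ) : Prop :=
  ∃ P : List ℕ, P.length = n ∧ P.Nodup ∧ P.IsChain (fun a b => s(a, b) ∈ B)

lemma HasPath.hasCopy {B : Set (Sym2 ℕ)} {n : ℕ} (h : HasPath B n) :
    HasCopy (pathGraph n) B := by
  obtain ⟨P, rfl, hn, hc⟩ := h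
  refine ⟨fun i => P[i], fun i j hij => ?_, fun a b hab => ?_⟩
  · exact Fin.ext ((List.Nodup.getElem_inj_iff hn).1 hij)
  · rw [List.isChain_iff_getElem] at hc
    rcases pathGraph_adj.1 hab with h | h
    · have := hc a.1 (by omega)
      simpa [h] using this
    · have := hc b.1 (by omega)
      rw [Sym2.eq_swap]
      simpa [h] using this

lemma hasCopy_cycle {R : Set (Sym2 ℕ)} {a b c d : ℕ} (hn : [a, b, c, d].Nodup)
    (h1 : s(a, b) ∈ R) (h2 : s(b, c) ∈ R) (h3 : s(c, d) ∈ R) (h4 : s(d, a) ∈ R) :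
    HasCopy (cycleGraph 4) R := by
  refine ⟨fun i => [a, b, c, d].get i, ?_, ?_⟩
  · exact List.nodup_iff_injective_get.1 hn
  · intro i j hij
    have h1' : s(b, a) ∈ R := by rwa [Sym2.eq_swap]
    have h2' : s(c, b) ∈ R := by rwa [Sym2.eq_swap]
    have h3' : s(d, c) ∈ R := by rwa [Sym2.eq_swap]
    have h4' : s(a, d) ∈ R := by rwa [Sym2.eq_swap]
    rw [cycleGraph_adj] at hij
    fin_cases i <;> fin_cases j <;> first | assumption | (exfalso; revert hij; decide)

/-! ### Strategy trees -/

/-- A finite Builder strategy on abstract vertices: `node i j t u` plays the edge `ij` and goes on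
with `t` if it becomes red and with `u` if it becomes blue; `cyc` announces a red 4-cycle and
`path` a blue path (described by two lists). -/
inductive T where
  | cyc (a b c d : ℕ)
  | path (l m : List ℕ)
  | node (i j : ℕ) (t u : T)

/-- `ab` is one of the listed edges. -/
def hasE (E : List (ℕ × ℕ)) (a b : ℕ) : Bool := E.contains (a, b) || E.contains (b, a)

/-- Consecutive vertices of the list are joined by listed edges. -/
def chainE (E : List (ℕ × ℕ)) : List ℕ → Bool
  | a :: b :: l => hasE E a b && chainE E (b :: l)
  | _ => true

/-- The strategy tree is correct and uses at most `r` rounds. -/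
def check (leaf : List (ℕ × ℕ) → List ℕ → List ℕ → Bool) :
    T → ℕ → List (ℕ × ℕ) → List (ℕ × ℕ) → Bool
  | .cyc a b c d, _, R, _ =>
      decide [a, b, c, d].Nodup && chainE R [a, b, c, d, a]
  | .path l m, _, _, B => leaf B l m
  | .node _ _ _ _, 0, _, _ => false
  | .node i j t u, r + 1, R, B =>
      decide (i ≠ j) && check leaf t r ((i, j) :: R) B && check leaf u r R ((i, j) :: B)

/-- Every listed abstract edge lies in `S`, after renaming vertices by `f`. -/
def Realized (f : ℕ → ℕ) (E : List (ℕ × ℕ)) (S : Set (Sym2 ℕ)) : Prop :=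
  ∀ p ∈ E, s(f p.1, f p.2) ∈ S

lemma Realized.cons {f : ℕ → ℕ} {E : List (ℕ × ℕ)} {S : Set (Sym2 ℕ)} (h : Realized f E S) (i j : ℕ) :
    Realized f ((i, j) :: E) (insert s(f i, f j) S) := by
  intro p hp
  rcases List.mem_cons.1 hp with rfl | hp
  · exact Set.mem_insert _ _
  · exact Set.mem_insert_of_mem _ (h p hp)

lemma Realized.mono {f : ℕ → ℕ} {E : List (ℕ × ℕ)} {S S' : Set (Sym2 ℕ)} (h : Realized f E S)
    (hS : S ⊆ S') : Realized f E S' := fun p hp => hS (h p hp)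

lemma Realized.hasE {f : ℕ → ℕ} {E : List (ℕ × ℕ)} {S : Set (Sym2 ℕ)} (h : Realized f E S) {a b : ℕ}
    (hab : hasE E a b = true) : s(f a, f b) ∈ S := by
  simp only [_root_.hasE, Bool.or_eq_true, List.contains_iff_mem] at hab
  rcases hab with hab | hab
  · exact h _ hab
  · rw [Sym2.eq_swap]
    exact h _ hab

lemma Realized.chainE {f : ℕ → ℕ} {E : List (ℕ × ℕ)} {S : Set (Sym2 ℕ)} (h : Realized f E S) :
    ∀ l : List ℕ, chainE E l = true → (l.map f).IsChain (fun a b => s(a, b) ∈ S)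
  | [], _ => by simp
  | [a], _ => by simp
  | a :: b :: l, hl => by
    simp only [_root_.chainE, Bool.and_eq_true] at hl
    have := Realized.chainE h (b :: l) hl.2
    simp only [List.map_cons, List.isChain_cons_cons] at this ⊢
    exact ⟨h.hasE hl.1, this⟩

/-- Soundness of strategy trees: a correct tree with `r` rounds lets Builder reach in `r` rounds
a blue path on `n` vertices (or win); `s` more rounds are then enough by assumption. -/
lemma check_sound {k n s : ℕ} {leaf : List (ℕ × ℕ) → List ℕ → List ℕ → Bool} {f : ℕ → ℕ}
    (hf : Function.Injective f) {B₀ : Set (Sym2 ℕ)}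
    (hleaf : ∀ (E : List (ℕ × ℕ)) (l m : List ℕ) (B : Set (Sym2 ℕ)), leaf E l m = true →
      B₀ ⊆ B → Realized f E B → HasPath B n)
    (hs : ∀ R B : Set (Sym2 ℕ), HasPath B n → Win k R B s) (t : T) :
    ∀ (r : ℕ) (ER EB : List (ℕ × ℕ)) (R B : Set (Sym2 ℕ)), check leaf t r ER EB = true →
      B₀ ⊆ B → Realized f ER R → Realized f EB B → Win k R B (r + s) := by
  induction t with
  | cyc a b c d =>
    intro r ER EB R B h _ hR _
    simp only [check, Bool.and_eq_true, decide_eq_true_eq] at h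
    have hc := hR.chainE _ h.2
    simp only [List.map_cons, List.map_nil, List.isChain_cons_cons] at hc
    refine Win.of_red _ (hasCopy_cycle (a := f a) (b := f b) (c := f c) (d := f d) ?_
      hc.1 hc.2.1 hc.2.2.1 hc.2.2.2.1)
    simpa using h.1.map hf
  | path l m =>
    intro r ER EB R B h hB₀ _ hB
    exact (hs R B (hleaf _ _ _ _ h hB₀ hB)).mono (by omega)
  | node i j t u iht ihu =>
    intro r ER EB R B h hB₀ hR hB
    cases r with
    | zero => simp [check] at h
    | succ r =>
      simp only [check, Bool.and_eq_true, decide_eq_true_eq] at h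
      obtain ⟨⟨hij, h1⟩, h2⟩ := h
      have e : r + 1 + s = (r + s) + 1 := by omega
      rw [e]
      refine Win.move s(f i, f j) ?_ ?_ ?_
      · simpa using fun h => hij (hf h)
      · exact iht r _ _ _ _ h1 hB₀ (hR.cons i j) hB
      · exact ihu r _ _ _ _ h2 (hB₀.trans (Set.subset_insert _ _)) hR (hB.cons i j)

/-! ### Starting from scratch -/

/-- The second list is a blue path on `n` vertices. -/
def leafBase (n : ℕ) (E : List (ℕ × ℕ)) (_ m : List ℕ) : Bool :=
  decide (m.length = n) && (decide m.Nodup && chainE E m)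

lemma win_start {k n r s : ℕ} (t : T) (ht : check (leafBase n) t r [] [] = true)
    (hs : ∀ R B : Set (Sym2 ℕ), HasPath B n → Win k R B s) : Win k ∅ ∅ (r + s) := by
  refine check_sound (f := id) (B₀ := ∅) Function.injective_id ?_ hs t r [] [] ∅ ∅ ht
    (Set.empty_subset _) (by simp [Realized]) (by simp [Realized])
  intro E l m B h _ hB
  simp only [leafBase, Bool.and_eq_true, decide_eq_true_eq] at h
  exact ⟨m, h.1, h.2.1, by simpa using hB.chainE _ h.2.2⟩

/-! ### Extending a blue path

The abstract vertices `1` and `0` stand for the first and last vertex of a given blue path. -/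

/-- The first list can be put in front of the path, the second one behind it. -/
def leafExt (n : ℕ) (E : List (ℕ × ℕ)) (l m : List ℕ) : Bool :=
  decide (l.length + m.length = n) && (decide (l ++ 1 :: 0 :: m).Nodup &&
    (chainE E (l ++ [1]) && chainE E (0 :: m)))

lemma win_extend {k p n r s : ℕ} (hp : 2 ≤ p) (t : T) (ht : check (leafExt n) t r [] [] = true)
    (hs : ∀ R B : Set (Sym2 ℕ), HasPath B (p + n) → Win k R B s) (R B : Set (Sym2 ℕ))
    (hB : HasPath B p) : Win k R B (r + s) := by
  obtain ⟨P, rfl, hn, hc⟩ := hB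
  obtain ⟨w, Q, v, rfl⟩ : ∃ w Q v, P = w :: (Q ++ [v]) := by
    cases P with
    | nil => simp at hp
    | cons w P' =>
      rcases List.eq_nil_or_concat P' with rfl | ⟨Q, v, rfl⟩
      · simp at hp
      · exact ⟨w, Q, v, by simp⟩
  set P := w :: (Q ++ [v]) with hP
  obtain ⟨M, hM⟩ : ∃ M, ∀ x ∈ P, x < M :=
    ⟨P.sum + 1, fun x hx => Nat.lt_succ_of_le (List.le_sum_of_mem hx)⟩
  have hwM : w < M := hM w (by simp [hP])
  have hvM : v < M := hM v (by simp [hP])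
  have hwv : w ≠ v := by
    rintro rfl
    simp [hP] at hn
  let f : ℕ → ℕ := fun x => if x = 0 then v else if x = 1 then w else M + x
  have hf0 : f 0 = v := rfl
  have hf1 : f 1 = w := rfl
  have hf2 : ∀ x, x ≠ 0 → x ≠ 1 → M ≤ f x := by
    intro x h0 h1
    simp [f, h0, h1]
  have hf : Function.Injective f := by
    intro x y hxy
    simp only [f] at hxy
    split_ifs at hxy <;> omega
  refine check_sound hf (B₀ := B) ?_ hs t r [] [] R B ht
    subset_rfl (by simp [Realized]) (by simp [Realized])
  intro E l m B' h hBB hB'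
  simp only [leafExt, Bool.and_eq_true, decide_eq_true_eq] at h
  obtain ⟨h1, h2, h3, h4⟩ := h
  have c1 := hB'.chainE _ h3
  have c2 := hB'.chainE _ h4
  have hc' : P.IsChain (fun a b => s(a, b) ∈ B') := hc.imp fun a b h => hBB h
  have h2' : l.Nodup ∧ m.Nodup ∧ 1 ∉ l ∧ 0 ∉ l ∧ 1 ∉ m ∧ 0 ∉ m ∧ List.Disjoint l m := by
    rw [List.nodup_append'] at h2
    simp only [List.nodup_cons, List.mem_cons, List.disjoint_cons_right] at h2
    tauto
  obtain ⟨nl, nm, l1, l0, m1, m0, dlm⟩ := h2'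
  have big : ∀ x, x ≠ 0 → x ≠ 1 → f x ∉ P := fun x h0 h1 hx =>
    absurd (hM _ hx) (not_lt.2 (hf2 x h0 h1))
  refine ⟨l.map f ++ (P ++ m.map f), ?_, ?_, ?_⟩
  · simp only [List.length_append, List.length_map]
    omega
  · rw [List.nodup_append', List.nodup_append']
    refine ⟨nl.map hf, ⟨hn, nm.map hf, ?_⟩, ?_⟩
    · intro y hy hy'
      obtain ⟨x, hx, rfl⟩ := List.mem_map.1 hy'
      exact big x (fun h => m0 (h ▸ hx)) (fun h => m1 (h ▸ hx)) hy
    · intro y hy hy'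
      obtain ⟨x, hx, rfl⟩ := List.mem_map.1 hy
      rcases List.mem_append.1 hy' with hy' | hy'
      · exact big x (fun h => l0 (h ▸ hx)) (fun h => l1 (h ▸ hx)) hy'
      · obtain ⟨z, hz, hzx⟩ := List.mem_map.1 hy'
        rw [hf hzx] at hz
        exact dlm hx hz
  · rw [List.map_append, List.map_cons, List.map_nil, hf1] at c1
    rw [List.map_cons, hf0] at c2
    have c3 : (P ++ m.map f).IsChain (fun a b => s(a, b) ∈ B') := by
      have e : P ++ m.map f = (w :: Q) ++ v :: m.map f := by simp [hP]
      rw [e, List.isChain_split]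
      refine ⟨?_, c2⟩
      simpa [hP] using hc'
    have e : P ++ m.map f = w :: (Q ++ [v] ++ m.map f) := by simp [hP]
    rw [e] at c3 ⊢
    rw [List.isChain_split]
    exact ⟨c1, c3⟩

/-! ### The three strategies -/

/-- Lengthen a blue path by one vertex in 4 rounds. -/
def treeOne : T :=
  (T.node 0 2 (T.node 0 3 (T.node 1 2 (T.node 1 3 (T.cyc 1 2 0 3) (T.path [3] [])) (T.path [2]
  [])) (T.path [] [3])) (T.path [] [2]))

/-- Lengthen a blue path by two vertices in 6 rounds. -/
def treeTwo : T :=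
  (T.node 0 2 (T.node 0 3 (T.node 1 2 (T.node 1 4 (T.node 0 4 (T.cyc 0 2 1 4) (T.node 1 3 (T.cyc 1
  2 0 3) (T.path [3] [4]))) (T.node 2 4 (T.node 3 4 (T.cyc 3 0 2 4) (T.path [3,4] [])) (T.path
  [2,4] []))) (T.node 0 4 (T.node 2 3 (T.node 2 4 (T.cyc 2 3 0 4) (T.path [4,2] [])) (T.path [3,2]
  [])) (T.path [2] [4]))) (T.node 1 2 (T.node 1 4 (T.node 2 3 (T.node 3 4 (T.cyc 3 2 1 4) (T.path
  [] [3,4])) (T.path [] [3,2])) (T.path [4] [3])) (T.path [2] [3]))) (T.node 1 3 (T.node 1 4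
  (T.node 2 3 (T.node 2 4 (T.cyc 2 3 1 4) (T.path [] [2,4])) (T.path [] [2,3])) (T.path [4] [2]))
  (T.path [3] [2])))

/-- Get a blue path on 5 vertices in 9 rounds. -/
def treeFive : T :=
  (T.node 0 1 (T.node 0 2 (T.node 1 3 (T.node 2 3 (T.cyc 2 0 1 3) (T.node 0 4 (T.node 1 2 (T.node
  0 3 (T.cyc 0 2 1 3) (T.node 1 4 (T.cyc 1 2 0 4) (T.node 2 4 (T.cyc 2 1 0 4) (T.path []
  [0,3,2,4,1])))) (T.node 3 4 (T.cyc 3 1 0 4) (T.node 1 5 (T.node 4 5 (T.cyc 4 0 1 5) (T.path []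
  [1,2,3,4,5])) (T.path [] [4,3,2,1,5])))) (T.node 1 4 (T.node 2 4 (T.cyc 2 0 1 4) (T.node 0 5
  (T.node 3 5 (T.cyc 3 1 0 5) (T.path [] [0,4,2,3,5])) (T.path [] [3,2,4,0,5]))) (T.node 0 3
  (T.node 1 2 (T.cyc 1 3 0 2) (T.path [] [0,4,1,2,3])) (T.path [] [1,4,0,3,2]))))) (T.node 1 4
  (T.node 2 4 (T.cyc 2 0 1 4) (T.node 0 3 (T.node 3 4 (T.cyc 3 0 1 4) (T.node 1 5 (T.node 2 5
  (T.cyc 2 0 1 5) (T.path [] [1,3,4,2,5])) (T.path [] [2,4,3,1,5]))) (T.node 0 4 (T.node 1 2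
  (T.cyc 1 4 0 2) (T.path [] [0,3,1,2,4])) (T.path [] [1,3,0,4,2])))) (T.node 0 3 (T.node 2 5
  (T.node 3 5 (T.cyc 3 0 2 5) (T.node 2 3 (T.node 0 5 (T.cyc 0 3 2 5) (T.path [] [0,5,3,1,4]))
  (T.node 1 5 (T.cyc 1 0 2 5) (T.path [] [2,3,5,1,4])))) (T.node 1 2 (T.node 2 3 (T.cyc 2 1 0 3)
  (T.path [] [4,1,3,2,5])) (T.node 2 4 (T.node 3 4 (T.cyc 3 0 2 4) (T.path [] [3,4,1,2,5]))
  (T.path [] [3,1,4,2,5])))) (T.node 0 5 (T.node 2 4 (T.node 4 5 (T.cyc 4 2 0 5) (T.path []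
  [0,3,1,4,5])) (T.path [] [0,3,1,4,2])) (T.path [] [4,1,3,0,5]))))) (T.node 0 3 (T.node 1 2
  (T.node 2 3 (T.cyc 2 1 0 3) (T.node 1 4 (T.node 3 4 (T.cyc 3 0 1 4) (T.node 0 5 (T.node 4 5
  (T.cyc 4 1 0 5) (T.path [] [0,2,3,4,5])) (T.path [] [4,3,2,0,5]))) (T.node 0 4 (T.node 1 3
  (T.node 3 4 (T.cyc 3 1 0 4) (T.path [] [0,2,3,4,1])) (T.path [] [0,2,3,1,4])) (T.path []
  [1,4,0,2,3])))) (T.node 1 4 (T.node 3 4 (T.cyc 3 0 1 4) (T.node 0 4 (T.node 1 3 (T.cyc 1 4 0 3)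
  (T.path [] [0,2,1,3,4])) (T.path [] [1,2,0,4,3]))) (T.node 0 5 (T.node 3 4 (T.node 4 5 (T.cyc 4
  3 0 5) (T.path [] [0,2,1,4,5])) (T.path [] [0,2,1,4,3])) (T.path [] [4,1,2,0,5])))) (T.node 1 2
  (T.node 1 3 (T.node 2 4 (T.node 3 4 (T.cyc 3 1 2 4) (T.node 3 5 (T.node 2 5 (T.cyc 2 1 3 5)
  (T.path [] [4,3,0,2,5])) (T.node 0 4 (T.cyc 0 1 2 4) (T.path [] [2,0,4,3,5])))) (T.node 1 4
  (T.node 3 5 (T.node 4 5 (T.cyc 4 1 3 5) (T.path [] [3,0,2,4,5])) (T.path [] [4,2,0,3,5]))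
  (T.path [] [1,4,2,0,3]))) (T.node 1 4 (T.node 1 5 (T.node 2 4 (T.node 2 5 (T.cyc 2 4 1 5)
  (T.path [] [1,3,0,2,5])) (T.path [] [1,3,0,2,4])) (T.path [] [2,0,3,1,5])) (T.path []
  [2,0,3,1,4]))) (T.node 1 4 (T.node 1 5 (T.node 3 4 (T.node 3 5 (T.cyc 3 4 1 5) (T.path []
  [1,2,0,3,5])) (T.path [] [1,2,0,3,4])) (T.path [] [3,0,2,1,5])) (T.path [] [3,0,2,1,4])))))
  (T.node 0 2 (T.node 0 3 (T.node 1 2 (T.node 1 3 (T.cyc 1 2 0 3) (T.node 2 4 (T.node 3 4 (T.cyc 3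
  0 2 4) (T.node 0 5 (T.node 4 5 (T.cyc 4 2 0 5) (T.path [] [0,1,3,4,5])) (T.path []
  [4,3,1,0,5]))) (T.node 0 4 (T.node 2 3 (T.node 3 4 (T.cyc 3 2 0 4) (T.path [] [0,1,3,4,2]))
  (T.path [] [0,1,3,2,4])) (T.path [] [2,4,0,1,3])))) (T.node 2 4 (T.node 3 4 (T.cyc 3 0 2 4)
  (T.node 0 4 (T.node 2 3 (T.cyc 2 4 0 3) (T.path [] [0,1,2,3,4])) (T.path [] [2,1,0,4,3])))
  (T.node 0 5 (T.node 3 4 (T.node 4 5 (T.cyc 4 3 0 5) (T.path [] [0,1,2,4,5])) (T.path []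
  [0,1,2,4,3])) (T.path [] [4,2,1,0,5])))) (T.node 1 2 (T.node 1 4 (T.node 2 3 (T.node 3 4 (T.cyc
  3 2 1 4) (T.node 3 5 (T.node 1 5 (T.cyc 1 2 3 5) (T.path [] [4,3,0,1,5])) (T.node 0 4 (T.cyc 0 2
  1 4) (T.path [] [1,0,4,3,5])))) (T.node 0 4 (T.cyc 0 2 1 4) (T.node 2 5 (T.node 4 5 (T.cyc 4 1 2
  5) (T.path [] [2,3,0,4,5])) (T.path [] [1,0,3,2,5])))) (T.node 2 3 (T.node 2 4 (T.node 3 5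
  (T.node 4 5 (T.cyc 4 2 3 5) (T.path [] [3,0,1,4,5])) (T.path [] [4,1,0,3,5])) (T.path []
  [2,4,1,0,3])) (T.path [] [2,3,0,1,4]))) (T.node 2 4 (T.node 2 5 (T.node 3 4 (T.node 3 5 (T.cyc 3
  4 2 5) (T.path [] [2,1,0,3,5])) (T.path [] [2,1,0,3,4])) (T.path [] [3,0,1,2,5])) (T.path []
  [3,0,1,2,4])))) (T.node 1 3 (T.node 1 4 (T.node 2 3 (T.node 2 4 (T.cyc 2 3 1 4) (T.node 1 5
  (T.node 3 4 (T.node 4 5 (T.cyc 4 3 1 5) (T.path [] [1,0,2,4,5])) (T.path [] [1,0,2,4,3]))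
  (T.path [] [4,2,0,1,5]))) (T.node 1 5 (T.node 3 4 (T.node 3 5 (T.cyc 3 4 1 5) (T.path []
  [1,0,2,3,5])) (T.path [] [1,0,2,3,4])) (T.path [] [3,2,0,1,5]))) (T.node 2 3 (T.node 2 5 (T.node
  3 4 (T.node 4 5 (T.cyc 4 3 2 5) (T.path [] [2,0,1,4,5])) (T.path [] [2,0,1,4,3])) (T.path []
  [4,1,0,2,5])) (T.path [] [3,2,0,1,4]))) (T.node 2 4 (T.node 2 5 (T.node 3 4 (T.node 3 5 (T.cyc 3
  4 2 5) (T.path [] [2,0,1,3,5])) (T.path [] [2,0,1,3,4])) (T.path [] [3,1,0,2,5])) (T.path []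
  [3,1,0,2,4])))))

lemma check_one : check (leafExt 1) treeOne 4 [] [] = true := by decide +kernel

lemma check_two : check (leafExt 2) treeTwo 6 [] [] = true := by decide +kernel

lemma check_five : check (leafBase 5) treeFive 9 [] [] = true := by decide +kernel

/-- From a blue path on `p ≥ 2` vertices Builder gets one on `p + j` vertices in `3j + 1` rounds. -/
lemma win_from_path (k : ℕ) : ∀ (j p : ℕ), 2 ≤ p → p + j = k → ∀ R B : Set (Sym2 ℕ),
    HasPath B p → Win k R B (3 * j + 1)
  | 0, p, _, h, R, B, hB => by
    obtain rfl : p = k := by omega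
    exact Win.of_blue _ hB.hasCopy
  | 1, p, hp, h, R, B, hB => by
    subst h
    exact win_extend (s := 0) hp treeOne check_one
      (fun R B hB => Win.of_blue _ hB.hasCopy) R B hB
  | j + 2, p, hp, h, R, B, hB => by
    have := win_extend hp treeTwo check_two
      (win_from_path k j (p + 2) (by omega) (by omega)) R B hB
    exact this.mono (by omega)

/-- For every integer `k ≥ 6` we have `ř(C₄, Pₖ) ≤ 3 * k - 5`. -/
theorem onlineRamsey_C4_path_upper (k : ℕ) (hk : 6 ≤ k) :
    onlineRamsey (cycleGraph 4) (pathGraph k) ≤ 3 * k - 5 := by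
  refine Nat.sInf_le ?_
  have h := win_start treeFive check_five (win_from_path k (k - 5) 5 (by omega) (by omega))
  exact h.mono (by omega)
end

section
/- In the online Ramsey game with targets red C₄ and blue P₆, consider the position in which the five edges v₁v₂, v₂v₃, v₃v₄, v₄v₅, v₅v₆ of a path on six distinct vertices have been colored blue, red, blue, blue, red respectively (case B7). From this position Builder can force a red copy of C₄ or a blue copy of P₆ within at most 6 additional rounds, so within at most 11 rounds in total. -/
open SimpleGraph

/-- Certificates for Builder's strategy trees, on vertices labelled by `Fin 7`. -/
inductive Strat where
  | red (f : Fin 4 → Fin 7) : Strat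
  | blue (f : Fin 6 → Fin 7) : Strat
  | move (a b : Fin 7) (ifRed ifBlue : Strat) : Strat

/-- Validity of a strategy tree for a position given by lists of labelled edges. -/
def Strat.Valid : Strat → List (Sym2 (Fin 7)) → List (Sym2 (Fin 7)) → ℕ → Prop
  | .red f, R, _, _ => Function.Injective f ∧
      ∀ i : Fin 4, s(f i, f (i + 1)) ∈ R
  | .blue f, _, B, _ => Function.Injective f ∧
      ∀ i : Fin 5, s(f i.castSucc, f i.succ) ∈ B
  | .move _ _ _ _, _, _, 0 => False
  | .move a b t u, R, B, r + 1 => a ≠ b ∧ s(a, b) ∉ R ∧ s(a, b) ∉ B ∧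
      t.Valid (s(a, b) :: R) B r ∧ u.Valid R (s(a, b) :: B) r

/-- The image in `ℕ` of a list of labelled edges. -/
def edgeImage (w : Fin 7 → ℕ) (L : List (Sym2 (Fin 7))) : Set (Sym2 ℕ) :=
  {e | ∃ x ∈ L, Sym2.map w x = e}

lemma edgeImage_cons (w : Fin 7 → ℕ) (x : Sym2 (Fin 7)) (L : List (Sym2 (Fin 7))) :
    edgeImage w (x :: L) = insert (Sym2.map w x) (edgeImage w L) := by
  ext e
  simp [edgeImage, eq_comm]

lemma mem_edgeImage {w : Fin 7 → ℕ} (hw : Function.Injective w) (x : Sym2 (Fin 7))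
    (L : List (Sym2 (Fin 7))) : Sym2.map w x ∈ edgeImage w L ↔ x ∈ L := by
  constructor
  · rintro ⟨y, hy, h⟩
    rwa [← Sym2.map.injective hw h]
  · exact fun h => ⟨x, h, rfl⟩

lemma BuilderWinsIn.of_hasCopy {V W : Type*} {G : SimpleGraph V} {H : SimpleGraph W}
    {R B : Set (Sym2 ℕ)} (h : HasCopy G R ∨ HasCopy H B) (r : ℕ) :
    BuilderWinsIn G H R B r := by
  cases r with
  | zero => exact h
  | succ r => exact h.elim Or.inl fun h => Or.inr (Or.inl h)

lemma Strat.Valid.sound {w : Fin 7 → ℕ} (hw : Function.Injective w) (t : Strat) :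
    ∀ (R B : List (Sym2 (Fin 7))) (r : ℕ), t.Valid R B r →
      BuilderWinsIn (cycleGraph 4) (pathGraph 6) (edgeImage w R) (edgeImage w B) r := by
  induction t with
  | red f =>
    rintro R B r h
    simp only [Strat.Valid] at h
    refine .of_hasCopy (Or.inl ⟨w ∘ f, hw.comp h.1, fun a b hab => ?_⟩) r
    refine (mem_edgeImage hw s(f a, f b) R).2 ?_
    rcases (cycleGraph_adj (n := 2)).1 hab with h1 | h1
    · rw [sub_eq_iff_eq_add.1 h1, Sym2.eq_swap, add_comm]
      exact h.2 b
    · rw [sub_eq_iff_eq_add.1 h1, add_comm]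
      exact h.2 a
  | blue f =>
    rintro R B r h
    simp only [Strat.Valid] at h
    refine .of_hasCopy (Or.inr ⟨w ∘ f, hw.comp h.1, fun a b hab => ?_⟩) r
    refine (mem_edgeImage hw s(f a, f b) B).2 ?_
    have key : ∀ a b : Fin 6, a.val + 1 = b.val → s(f a, f b) ∈ B := by
      intro a b hab
      have := h.2 ⟨a.val, by omega⟩
      have hb : b = Fin.succ (⟨a.val, by omega⟩ : Fin 5) := Fin.ext hab.symm
      rw [hb]
      exact this
    rcases pathGraph_adj.1 hab with h1 | h1
    · exact key a b h1
    · rw [Sym2.eq_swap]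
      exact key b a h1
  | move a b t u iht ihu =>
    rintro R B (_ | r) h
    · exact h.elim
    · obtain ⟨hab, hR, hB, ht, hu⟩ := h
      refine Or.inr (Or.inr ⟨Sym2.map w s(a, b), ?_, ?_, ?_, ?_, ?_⟩)
      · simpa using fun h => hab (hw h)
      · rwa [mem_edgeImage hw]
      · rwa [mem_edgeImage hw]
      · rw [← edgeImage_cons]
        exact iht _ _ _ ht
      · rw [← edgeImage_cons]
        exact ihu _ _ _ hu

/-- Builder's strategy in case `B7`; vertex `6` is a fresh vertex. -/
def stratB7 : Strat :=
  (.move 1 4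
    (.move 2 5
    (.red ![1, 2, 5, 4]) (.move 0 4
    (.move 0 5
    (.move 1 5
    (.red ![0, 4, 1, 5]) (.blue ![0, 1, 5, 2, 3, 4])) (.blue ![1, 0, 5, 2, 3, 4])) (.blue ![1, 0, 4, 3, 2, 5]))) (.move 0 5
    (.move 0 6
    (.move 2 5
    (.move 2 6
    (.red ![0, 5, 2, 6]) (.blue ![0, 1, 4, 3, 2, 6])) (.blue ![0, 1, 4, 3, 2, 5])) (.blue ![2, 3, 4, 1, 0, 6])) (.blue ![2, 3, 4, 1, 0, 5])))

lemma stratB7_valid : stratB7.Valid [s(1, 2), s(4, 5)] [s(0, 1), s(2, 3), s(3, 4)] 6 := by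
  simp only [stratB7, Strat.Valid, Function.Injective]
  repeat' apply And.intro
  all_goals decide

/-- Case `B7`: in the online Ramsey game with targets red `C₄` and blue `P₆`,
from the position in which the five edges `v₁v₂, v₂v₃, v₃v₄, v₄v₅, v₅v₆` of a path on
six distinct vertices have been colored blue, red, blue, blue, red respectively,
Builder can force a red copy of `C₄` or a blue copy of `P₆` within at most 6 additional
rounds (so within at most 11 rounds in total). -/
theorem builder_wins_case_B7 (v : Fin 6 → ℕ) (hv : Function.Injective v) :
    BuilderWinsIn (cycleGraph 4) (pathGraph 6)
      {s(v 1, v 2), s(v 4, v 5)}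
      {s(v 0, v 1), s(v 2, v 3), s(v 3, v 4)} 6 := by
  obtain ⟨z, hz⟩ := Infinite.exists_notMem_finset (Finset.univ.image v)
  have hz' : ∀ i, v i ≠ z := by simpa using hz
  have hw : Function.Injective (Fin.snoc v z : Fin 7 → ℕ) := by
    rw [Fin.snoc_injective_iff]
    exact ⟨hv, by simpa using hz'⟩
  have h := Strat.Valid.sound hw stratB7 _ _ _ stratB7_valid
  simp only [edgeImage_cons, Sym2.map_mk] at h
  have e0 : edgeImage (Fin.snoc v z : Fin 7 → ℕ) [] = ∅ := by simp [edgeImage]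
  rw [e0] at h
  have e1 : ∀ x : Sym2 ℕ, (insert x ∅ : Set (Sym2 ℕ)) = {x} := fun x => by simp
  rw [e1, e1] at h
  exact h
end
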